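/- arXiv:1706.03631 — 3 statements merged into one kernel-verified Lean document; each statement's English description precedes it below -/
import Mathlib

section
/- Let m ≥ 1, n ≥ 2, 1 ≤ r ≤ n+2, and let u_1, …, u_r ∈ ℂ^n be in general linear position, i.e. every subset of them of cardinality at most n is linearly independent. Define the symmetric tensor S by S(i) = Σ_{j=1}^r ∏_{t=1}^m u_j(i_t). Then there exists an invertible matrix G ∈ GL_n(ℂ) such that the tensor G·S defined by (G·S)(i) = Σ_{j=1}^r ∏_{t=1}^m (G u_j)(i_t) is a Hankel tensor with rank_V(G·S) ≤ r; moreover, if rank_S(S) = r, then rank_V(G·S) = rank_S(S). -/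
open scoped BigOperators
open MvPolynomial

noncomputable section

/-- An order-`m`, dimension-`n` complex tensor. -/
abbrev Tensor (m n : ℕ) := (Fin m → Fin n) → ℂ

/-- Tensors expressible as a sum of `r` rank-one tensors. -/
def cpSet (m n r : ℕ) : Set (Tensor m n) :=
  {T | ∃ u : Fin r → Fin m → Fin n → ℂ, ∀ i, T i = ∑ k, ∏ j, u k j (i j)}

/-- Tensors expressible as a sum of `r` symmetric rank-one tensors. -/
def symSet (m n r : ℕ) : Set (Tensor m n) :=
  {T | ∃ v : Fin r → Fin n → ℂ, ∀ i, T i = ∑ k, ∏ j, v k (i j)}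

/-- The Vandermonde vector `v(a,b) ∈ ℂ^n`, `v(a,b)_i = a^(n-1-i) * b^i`. -/
def vand (n : ℕ) (a b : ℂ) : Fin n → ℂ := fun i => a ^ (n - 1 - (i : ℕ)) * b ^ (i : ℕ)

/-- Tensors expressible as a sum of `r` Vandermonde rank-one tensors. -/
def vandSet (m n r : ℕ) : Set (Tensor m n) :=
  {T | ∃ ab : Fin r → ℂ × ℂ, ∀ i, T i = ∑ k, ∏ j, vand n (ab k).1 (ab k).2 (i j)}

/-- The cp rank of a tensor. -/
def cpRank {m n : ℕ} (T : Tensor m n) : ℕ := sInf {r | T ∈ cpSet m n r}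

/-- The symmetric rank of a tensor. -/
def symRank {m n : ℕ} (T : Tensor m n) : ℕ := sInf {r | T ∈ symSet m n r}

/-- The Vandermonde rank of a tensor. -/
def vandRank {m n : ℕ} (T : Tensor m n) : ℕ := sInf {r | T ∈ vandSet m n r}

/-- The border rank of a tensor (closure in the product topology). -/
def brank {m n : ℕ} (T : Tensor m n) : ℕ := sInf {r | T ∈ closure (cpSet m n r)}

/-- The symmetric border rank of a tensor. -/
def bSymRank {m n : ℕ} (T : Tensor m n) : ℕ := sInf {r | T ∈ closure (symSet m n r)}

/-- The border Vandermonde rank of a tensor. -/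
def bVandRank {m n : ℕ} (T : Tensor m n) : ℕ := sInf {r | T ∈ closure (vandSet m n r)}

/-- `T` is the Hankel tensor with parameter vector `h ∈ ℂ^{(n-1)m+1}`. -/
def IsHankel {m n : ℕ} (T : Tensor m n) (h : Fin ((n - 1) * m + 1) → ℂ) : Prop :=
  ∀ i : Fin m → Fin n, T i = h ⟨∑ j, (i j : ℕ), by
    have h1 : ∑ j, (i j : ℕ) ≤ ∑ _j : Fin m, (n - 1) :=
      Finset.sum_le_sum fun j _ => Nat.le_pred_of_lt (i j).isLt
    simp only [Finset.sum_const, Finset.card_univ, Fintype.card_fin, smul_eq_mul] at h1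
    exact Nat.lt_succ_of_le (h1.trans (le_of_eq (Nat.mul_comm m (n - 1))))⟩

/-- The `(d-r+1) × (r+1)` Hankel (catalecticant) matrix `C_{d-r,r}(h)` of `h ∈ ℂ^{d+1}`. -/
def hMat (d r : ℕ) (h : Fin (d + 1) → ℂ) : Matrix (Fin (d - r + 1)) (Fin (r + 1)) ℂ :=
  Matrix.of fun i j => if hij : (i : ℕ) + (j : ℕ) < d + 1 then h ⟨(i : ℕ) + (j : ℕ), hij⟩ else 0

/-- The binary form `f(x,y) = f_0 x^r + f_1 x^(r-1) y + ⋯ + f_r y^r`. -/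
def binForm (r : ℕ) (f : Fin (r + 1) → ℂ) : MvPolynomial (Fin 2) ℂ :=
  ∑ j : Fin (r + 1), C (f j) * X 0 ^ (r - (j : ℕ)) * X 1 ^ (j : ℕ)

/-- The binary form `h(x,y) = ∑_j binom(d,j) h_j x^j y^(d-j)` associated with `h ∈ ℂ^{d+1}`. -/
def assocForm (d : ℕ) (h : Fin (d + 1) → ℂ) : MvPolynomial (Fin 2) ℂ :=
  ∑ j : Fin (d + 1), C ((d.choose (j : ℕ) : ℂ) * h j) * X 0 ^ (j : ℕ) * X 1 ^ (d - (j : ℕ))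

/-- Parameter vectors of binary forms of Waring rank at most `r`. -/
def waringSet (d r : ℕ) : Set (Fin (d + 1) → ℂ) :=
  {h | ∃ ab : Fin r → ℂ × ℂ,
    assocForm d h = ∑ i, (C (ab i).1 * X 0 + C (ab i).2 * X 1) ^ d}

/-- The Waring rank of the binary form associated with `h`. -/
def waringRank (d : ℕ) (h : Fin (d + 1) → ℂ) : ℕ := sInf {r | h ∈ waringSet d r}

/-- The border Waring rank of the binary form associated with `h`. -/
def bWaringRank (d : ℕ) (h : Fin (d + 1) → ℂ) : ℕ := sInf {r | h ∈ closure (waringSet d r)}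

/-!
Among `n + 2` vectors of `ℂ^n` in general linear position the linear relations form a plane, and
since a relation with two zero coordinates vanishes, the `n + 2` coordinates of a relation, written
in a basis of that plane, are given by `n + 2` distinct points `(a_k : b_k)` of `ℙ¹`. The vectors
`v(a_k, b_k) ∈ ℂ^(n+1)` satisfy one relation, with coefficients `c_k ≠ 0`; splitting off a linear
factor from each form of degree `n` shows that the vectors `c_k • v(a_k, b_k) ∈ ℂ^n` satisfy every
relation satisfied by the given ones, so some `G ∈ GL_n(ℂ)` maps the latter to the former. As `ℂ`
contains `(n-1)`-st roots, the factors `c_k` can be absorbed into the points. Fewer than `n + 2`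
vectors can be completed to `n + 2` of them, because `ℂ^n` is not a finite union of hyperplanes.
-/

open Matrix Module Submodule

section GeneralLinearPosition

variable {K V ι : Type*} [Field K] [AddCommGroup V] [Module K V]

/-- Vectors in general linear position: any `d` of them are linearly independent as long as `d` does
not exceed the dimension of the ambient space. -/
def InGeneralLinearPosition (K : Type*) {V ι : Type*} [Field K] [AddCommGroup V] [Module K V]
    (u : ι → V) : Prop :=
  ∀ s : Finset ι, s.card ≤ finrank K V → LinearIndepOn K u s

lemma inGeneralLinearPosition_of_card_eq [Fintype ι] {u : ι → V}
    (hcard : finrank K V ≤ Fintype.card ι)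
    (h : ∀ s : Finset ι, s.card = finrank K V → LinearIndepOn K u s) :
    InGeneralLinearPosition K u := by
  intro s hs
  obtain ⟨t, hst, -, ht⟩ :=
    Finset.exists_subsuperset_card_eq s.subset_univ hs (by simpa using hcard)
  exact (h t ht).mono (by exact_mod_cast hst)

namespace InGeneralLinearPosition

lemma span_range_eq_top [Fintype ι] {u : ι → V} (hu : InGeneralLinearPosition K u)
    [FiniteDimensional K V] (hcard : finrank K V ≤ Fintype.card ι) :
    span K (Set.range u) = ⊤ := by
  obtain ⟨s, -, hs⟩ := Finset.exists_subset_card_eq (s := Finset.univ) (by simpa using hcard)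
  have hspan : span K (Set.range fun k : s => u k) = ⊤ :=
    (hu s hs.le).linearIndependent.span_eq_top_of_card_eq_finrank' (by simpa using hs)
  exact top_unique (hspan.ge.trans (span_mono (Set.range_comp_subset_range _ u)))

lemma eq_zero_of_sum_smul_eq_zero [Fintype ι] {u : ι → V} (hu : InGeneralLinearPosition K u)
    {z : Finset ι} (hz : Fintype.card ι ≤ finrank K V + z.card) {c : ι → K}
    (hc : ∑ k, c k • u k = 0) (hcz : ∀ k ∈ z, c k = 0) : c = 0 := by
  classical
  have hsum : ∑ k ∈ zᶜ, c k • u k = 0 := by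
    rw [← hc, ← Finset.sum_compl_add_sum z, Finset.sum_eq_zero (s := z), add_zero]
    exact fun k hk => by rw [hcz k hk, zero_smul]
  have hcard : zᶜ.card ≤ finrank K V := by rw [Finset.card_compl]; omega
  ext k
  by_cases hk : k ∈ z
  · exact hcz k hk
  · exact linearIndepOn_finset_iff.1 (hu zᶜ hcard) c hsum k (Finset.mem_compl.2 hk)

lemma exists_sum_smul_eq_zero_forall_ne_zero [Fintype ι] {u : ι → V}
    (hu : InGeneralLinearPosition K u) [FiniteDimensional K V]
    (hcard : Fintype.card ι = finrank K V + 1) :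
    ∃ c : ι → K, ∑ k, c k • u k = 0 ∧ ∀ k, c k ≠ 0 := by
  have hdep : ¬ LinearIndependent K u := fun h => by
    have := h.fintype_card_le_finrank
    omega
  obtain ⟨c, hc, k₀, hk₀⟩ := Fintype.not_linearIndependent_iff.1 hdep
  refine ⟨c, hc, fun k hk => hk₀ ?_⟩
  exact congr_fun (hu.eq_zero_of_sum_smul_eq_zero (z := {k}) (by simp [hcard]) hc (by simpa)) k₀

lemma finrank_ker_linearCombination [Fintype ι] [FiniteDimensional K V] {u : ι → V}
    (hu : InGeneralLinearPosition K u) (hcard : finrank K V ≤ Fintype.card ι) :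
    finrank K V + finrank K (Fintype.linearCombination K u).ker = Fintype.card ι := by
  have h := (Fintype.linearCombination K u).finrank_range_add_finrank_ker
  rwa [Fintype.range_linearCombination, hu.span_range_eq_top hcard, finrank_top,
    finrank_fintype_fun_eq_card] at h

-- A relation vanishing at two indices involves only `finrank K V` of the vectors, so it is zero:
-- any two coordinates are linearly independent functionals on the plane of relations.
lemma exists_forall_relation_eq_smul_add_smul [Fintype ι] [FiniteDimensional K V] {u : ι → V}
    (hu : InGeneralLinearPosition K u) (hcard : Fintype.card ι = finrank K V + 2) :
    ∃ a b : ι → K, (Pairwise fun k l => b k * a l ≠ b l * a k) ∧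
      ∀ c : ι → K, ∑ k, c k • u k = 0 → ∃ x y : K, c = x • a + y • b := by
  have hdim : finrank K (Fintype.linearCombination K u).ker = 2 := by
    have := hu.finrank_ker_linearCombination (by omega)
    omega
  let e := finBasisOfFinrankEq K _ hdim
  let a : ι → K := e 0
  let b : ι → K := e 1
  refine ⟨a, b, fun k l hkl hab => ?_, fun c hc => ⟨_, _, congrArg Subtype.val
    ((e.sum_repr ⟨c, hc⟩).symm.trans (Fin.sum_univ_two _))⟩⟩
  obtain ⟨v, hv0, hv⟩ := exists_mulVec_eq_zero_iff.2
    (show (!![a k, b k; a l, b l]).det = 0 by rw [det_fin_two_of]; linear_combination -hab)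
  have hvk : v 0 * a k + v 1 * b k = 0 := by
    simpa [mulVec, dotProduct, Fin.sum_univ_two, mul_comm] using congr_fun hv 0
  have hvl : v 0 * a l + v 1 * b l = 0 := by
    simpa [mulVec, dotProduct, Fin.sum_univ_two, mul_comm] using congr_fun hv 1
  have hvanish : v 0 • a + v 1 • b = 0 := by
    classical
    refine hu.eq_zero_of_sum_smul_eq_zero (z := {k, l}) ?_ (v 0 • e 0 + v 1 • e 1).2 ?_
    · rw [Finset.card_pair hkl, hcard]
    · simpa using ⟨hvk, hvl⟩
  have hsum : ∑ i, v i • e i = 0 := (Fin.sum_univ_two _).trans (Subtype.ext hvanish)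
  exact hv0 (funext (Fintype.linearIndependent_iff.1 e.linearIndependent v hsum))

end InGeneralLinearPosition

lemma exists_forall_notMem_span_image [Infinite K] [Finite ι] (u : ι → V) :
    ∃ x, ∀ s : Finset ι, s.card < finrank K V → x ∉ span K (u '' s) := by
  classical
  by_contra! hcover
  have hunion : ⋃ s : {s : Finset ι // s.card < finrank K V}, (span K (u '' s) : Set V) =
      Set.univ := Set.eq_univ_of_forall fun x =>
    let ⟨s, hs, hx⟩ := hcover x
    Set.mem_iUnion.2 ⟨⟨s, hs⟩, hx⟩
  obtain ⟨⟨s, hs⟩, htop : span K (u '' s) = ⊤⟩ := Subspace.exists_eq_top_of_iUnion_eq_univ hunion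
  have hrank : finrank K (span K (u '' s)) ≤ s.card := by
    rw [← Finset.coe_image]
    exact (finrank_span_finset_le_card _).trans Finset.card_image_le
  rw [htop, finrank_top] at hrank
  exact hs.not_ge hrank

lemma InGeneralLinearPosition.exists_snoc [Infinite K] {r : ℕ} {u : Fin r → V}
    (hu : InGeneralLinearPosition K u) :
    ∃ x, InGeneralLinearPosition K (Fin.snoc u x : Fin (r + 1) → V) := by
  obtain ⟨x, hx⟩ := exists_forall_notMem_span_image (K := K) u
  refine ⟨x, fun s hs => ?_⟩
  let t : Finset (Fin r) := s.preimage Fin.castSucc (Fin.castSucc_injective r).injOn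
  have hcomp : (Fin.snoc u x : Fin (r + 1) → V) ∘ Fin.castSucc = u := by ext; simp
  have himage : t.image Fin.castSucc = s.erase (Fin.last r) := by
    ext k
    cases k using Fin.lastCases <;> simp [t]
  have hcard : t.card = (s.erase (Fin.last r)).card := by
    rw [← himage, Finset.card_image_of_injective _ (Fin.castSucc_injective r)]
  have ht : LinearIndepOn K (Fin.snoc u x : Fin (r + 1) → V) (s.erase (Fin.last r) : Finset _) := by
    rw [← himage, Finset.coe_image]
    refine LinearIndepOn.image_of_comp _ _ ?_
    rw [hcomp]
    exact hu t (hcard.trans_le (Finset.card_erase_le.trans hs))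
  by_cases hlast : Fin.last r ∈ s
  · rw [← Finset.insert_erase hlast, Finset.coe_insert]
    refine ht.insert ?_
    rw [Fin.snoc_last, ← himage, Finset.coe_image, ← Set.image_comp, hcomp]
    exact hx t (by rw [hcard]; exact (Finset.card_erase_lt_of_mem hlast).trans_le hs)
  · rwa [Finset.erase_eq_of_notMem hlast] at ht

lemma InGeneralLinearPosition.exists_extension [Infinite K] {r s : ℕ} (hrs : r ≤ s)
    {u : Fin r → V} (hu : InGeneralLinearPosition K u) :
    ∃ v : Fin s → V, InGeneralLinearPosition K v ∧ ∀ k, v (Fin.castLE hrs k) = u k := by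
  induction hrs with
  | refl => exact ⟨u, hu, fun _ => rfl⟩
  | step h ih =>
    obtain ⟨v, hv, hvu⟩ := ih
    obtain ⟨x, hx⟩ := hv.exists_snoc
    refine ⟨_, hx, fun k => ?_⟩
    rw [← hvu, ← Fin.snoc_castSucc (α := fun _ => V) x v]
    rfl

end GeneralLinearPosition

lemma exists_linearMap_apply_eq {K V W ι : Type*} [Field K] [AddCommGroup V] [Module K V]
    [AddCommGroup W] [Module K W] [Fintype ι] {u : ι → V} {v : ι → W}
    (h : ∀ c : ι → K, ∑ k, c k • u k = 0 → ∑ k, c k • v k = 0) :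
    ∃ L : V →ₗ[K] W, ∀ k, L (u k) = v k := by
  classical
  let Φ := Fintype.linearCombination K u
  let Ψ := Fintype.linearCombination K v
  have hker : Φ.ker ≤ Ψ.ker := h
  obtain ⟨L, hL⟩ := (Φ.ker.liftQ Ψ hker ∘ₗ Φ.quotKerEquivRange.symm.toLinearMap).exists_extend
  refine ⟨L, fun k => ?_⟩
  have hk := LinearMap.congr_fun hL ⟨Φ (Pi.single k 1), LinearMap.mem_range_self Φ _⟩
  rw [LinearMap.comp_apply, LinearMap.comp_apply, LinearEquiv.coe_coe,
    LinearMap.quotKerEquivRange_symm_apply_image _ _ (LinearMap.mem_range_self Φ _),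
    mkQ_apply, liftQ_apply] at hk
  simpa [Φ, Ψ] using hk

section RationalNormalCurve

variable {K V ι : Type*} [Field K] [AddCommGroup V] [Module K V] [Fintype ι]

lemma linearIndependent_rectVandermonde_row {a b : ι → K} {n : ℕ} (hcard : Fintype.card ι = n)
    (hab : Pairwise fun k l => b k * a l ≠ b l * a k) :
    LinearIndependent K (rectVandermonde b a n).row := by
  let e := (Fintype.equivFinOfCardEq hcard).symm
  rw [← linearIndependent_equiv e]
  refine linearIndependent_rows_of_det_ne_zero (A := projVandermonde (b ∘ e) (a ∘ e)) ?_
  rw [det_projVandermonde]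
  refine Finset.prod_ne_zero_iff.2 fun i _ => Finset.prod_ne_zero_iff.2 fun j hj => sub_ne_zero.2 ?_
  exact hab (e.injective.ne (Finset.mem_Ioi.1 hj).ne')

lemma inGeneralLinearPosition_rectVandermonde_row {a b : ι → K} {n : ℕ}
    (hcard : n ≤ Fintype.card ι) (hab : Pairwise fun k l => b k * a l ≠ b l * a k) :
    InGeneralLinearPosition K (rectVandermonde b a n).row :=
  inGeneralLinearPosition_of_card_eq (by simpa) fun s hs =>
    linearIndependent_rectVandermonde_row (ι := s) (a := fun k => a k) (b := fun k => b k)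
      (by simpa using hs) fun _ _ hkl => hab (Subtype.coe_injective.ne hkl)

-- Multiplying a binary form of degree `n - 1` by `x X + y Y` gives a form of degree `n`.
lemma sum_mul_smul_rectVandermonde_row_eq_zero {a b c : ι → K} {n : ℕ}
    (h : ∑ k, c k • (rectVandermonde b a (n + 1)).row k = 0) (x y : K) :
    ∑ k, ((x * a k + y * b k) * c k) • (rectVandermonde b a n).row k = 0 := by
  have hentry (j : Fin (n + 1)) :
      ∑ k, c k * (b k ^ (j : ℕ) * a k ^ (j.rev : ℕ)) = 0 := by
    simpa [rectVandermonde_apply] using congr_fun h j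
  ext i
  calc (∑ k, ((x * a k + y * b k) * c k) • (rectVandermonde b a n).row k) i
      = x * ∑ k, c k * (b k ^ (i.castSucc : ℕ) * a k ^ (i.castSucc.rev : ℕ)) +
          y * ∑ k, c k * (b k ^ (i.succ : ℕ) * a k ^ (i.succ.rev : ℕ)) := by
        simp only [Finset.sum_apply, Pi.smul_apply, row_apply, rectVandermonde_apply, smul_eq_mul,
          Fin.rev_castSucc, Fin.rev_succ, Fin.val_succ, Fin.val_castSucc, Finset.mul_sum,
          ← Finset.sum_add_distrib]
        exact Finset.sum_congr rfl fun k _ => by ring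
    _ = (0 : Fin n → K) i := by rw [hentry, hentry, mul_zero, mul_zero, add_zero, Pi.zero_apply]

lemma InGeneralLinearPosition.exists_linearEquiv_rectVandermonde [FiniteDimensional K V] {u : ι → V}
    (hu : InGeneralLinearPosition K u) {n : ℕ} (hn : finrank K V = n)
    (hcard : Fintype.card ι = n + 2) :
    ∃ (L : V ≃ₗ[K] (Fin n → K)) (a b c : ι → K),
      ∀ k, L (u k) = c k • (rectVandermonde b a n).row k := by
  obtain ⟨a, b, hab, hrel⟩ := hu.exists_forall_relation_eq_smul_add_smul (by omega)
  obtain ⟨c, hc, hc0⟩ :=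
    (inGeneralLinearPosition_rectVandermonde_row (n := n + 1) (by omega) hab)
      |>.exists_sum_smul_eq_zero_forall_ne_zero (by simpa using hcard)
  obtain ⟨L, hL⟩ := exists_linearMap_apply_eq (u := u)
    (v := fun k => c k • (rectVandermonde b a n).row k) fun r hr => by
      obtain ⟨x, y, rfl⟩ := hrel r hr
      simpa [mul_smul] using sum_mul_smul_rectVandermonde_row_eq_zero hc x y
  have hrow : span K (Set.range (rectVandermonde b a n).row) = ⊤ :=
    (inGeneralLinearPosition_rectVandermonde_row (by omega) hab).span_range_eq_top
      (by simp [hcard])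
  have hsurj : Function.Surjective L := by
    rw [← LinearMap.range_eq_top, ← top_le_iff, ← hrow, span_le]
    rintro _ ⟨k, rfl⟩
    exact ⟨(c k)⁻¹ • u k, by rw [map_smul, hL, inv_smul_smul₀ (hc0 k)]⟩
  have hinj := (LinearMap.injective_iff_surjective_of_finrank_eq_finrank (by simpa)).2 hsurj
  exact ⟨.ofBijective L ⟨hinj, hsurj⟩, a, b, c, hL⟩

end RationalNormalCurve

lemma exists_vand_eq_smul_rectVandermonde_row {ι : Type*} {n : ℕ} (hn : 2 ≤ n) (a b : ι → ℂ)
    (c : ℂ) (k : ι) : ∃ x y, vand n x y = c • (rectVandermonde b a n).row k := by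
  obtain ⟨z, hz⟩ := IsAlgClosed.exists_pow_nat_eq c (show 0 < n - 1 by omega)
  refine ⟨z * a k, z * b k, funext fun i => ?_⟩
  have hi : n - 1 = (n - 1 - (i : ℕ)) + i := by omega
  have hrev : (i.rev : ℕ) = n - 1 - i := by rw [Fin.val_rev]; omega
  calc vand n (z * a k) (z * b k) i
      = z ^ (n - 1 - (i : ℕ) + i) * (b k ^ (i : ℕ) * a k ^ (n - 1 - (i : ℕ))) := by
        rw [vand]; ring
    _ = c * (b k ^ (i : ℕ) * a k ^ (i.rev : ℕ)) := by rw [← hi, hz, hrev]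

lemma exists_mulVec_eq_vand {n r : ℕ} (hn : 2 ≤ n) (hr : r ≤ n + 2) {u : Fin r → Fin n → ℂ}
    (hu : InGeneralLinearPosition ℂ u) :
    ∃ G : Matrix (Fin n) (Fin n) ℂ, IsUnit G.det ∧ ∀ k, ∃ x y, G *ᵥ u k = vand n x y := by
  obtain ⟨v, hv, hvu⟩ := hu.exists_extension hr
  obtain ⟨L, a, b, c, hL⟩ := hv.exists_linearEquiv_rectVandermonde (n := n) (by simp) (by simp)
  refine ⟨LinearMap.toMatrix' L, ?_, fun k => ?_⟩
  · rw [LinearMap.det_toMatrix']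
    exact L.isUnit_det'
  · obtain ⟨x, y, hxy⟩ := exists_vand_eq_smul_rectVandermonde_row hn a b _ (Fin.castLE hr k)
    exact ⟨x, y, by rw [LinearMap.toMatrix'_mulVec, LinearEquiv.coe_coe, ← hvu, hL, hxy]⟩

section KroneckerPower

variable {R ι : Type*} [CommSemiring R]

/-- The `m`-th Kronecker power of a square matrix `A`, acting on order-`m` tensors by `A` in every
mode: for `A = G`, this is the map `S ↦ G·S` of the paper. -/
def kroneckerPow (m : ℕ) (A : Matrix ι ι R) : Matrix (Fin m → ι) (Fin m → ι) R :=
  .of fun i l => ∏ t, A (i t) (l t)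

lemma kroneckerPow_mulVec_prod [Fintype ι] {m : ℕ} (A : Matrix ι ι R) (v : Fin m → ι → R) :
    (kroneckerPow m A *ᵥ fun i => ∏ t, v t (i t)) = fun i => ∏ t, (A *ᵥ v t) (i t) := by
  classical
  ext i
  simp only [kroneckerPow, mulVec, dotProduct, of_apply, Finset.prod_univ_sum,
    Fintype.piFinset_univ, Finset.prod_mul_distrib]

lemma kroneckerPow_mul [Fintype ι] (m : ℕ) (A B : Matrix ι ι R) :
    kroneckerPow m (A * B) = kroneckerPow m A * kroneckerPow m B := by
  classical
  ext i l
  simp only [kroneckerPow, mul_apply, of_apply, Finset.prod_univ_sum,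
    Fintype.piFinset_univ, Finset.prod_mul_distrib]

lemma kroneckerPow_one [DecidableEq ι] (m : ℕ) : kroneckerPow m (1 : Matrix ι ι R) = 1 := by
  ext i l
  simp [kroneckerPow, one_apply, Finset.prod_ite_zero, funext_iff]

end KroneckerPower

section Rank

variable {m n r : ℕ}

/-- The symmetric tensor `∑ k, (u k)^{⊗m}`. -/
def sumPow {κ : Type*} [Fintype κ] (m : ℕ) (u : κ → Fin n → ℂ) : Tensor m n :=
  fun i => ∑ k, ∏ t, u k (i t)

lemma kroneckerPow_mulVec_sumPow {κ : Type*} [Fintype κ] (A : Matrix (Fin n) (Fin n) ℂ)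
    (u : κ → Fin n → ℂ) :
    kroneckerPow m A *ᵥ sumPow m u = sumPow m fun k => A *ᵥ u k := by
  have hsum {v : κ → Fin n → ℂ} : sumPow m v = ∑ k, fun i => ∏ t, v k (i t) := by
    ext i
    rw [sumPow, Finset.sum_apply]
  simp only [hsum, mulVec_sum, kroneckerPow_mulVec_prod]

lemma kroneckerPow_mulVec_mem_symSet (A : Matrix (Fin n) (Fin n) ℂ)
    {T : Tensor m n} (hT : T ∈ symSet m n r) : kroneckerPow m A *ᵥ T ∈ symSet m n r := by
  obtain ⟨v, hv⟩ := hT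
  obtain rfl : T = sumPow m v := funext hv
  exact ⟨fun k => A *ᵥ v k, congr_fun (kroneckerPow_mulVec_sumPow A v)⟩

lemma kroneckerPow_mulVec_mem_symSet_iff {A : Matrix (Fin n) (Fin n) ℂ} (hA : IsUnit A.det)
    {T : Tensor m n} : kroneckerPow m A *ᵥ T ∈ symSet m n r ↔ T ∈ symSet m n r := by
  refine ⟨fun h => ?_, kroneckerPow_mulVec_mem_symSet A⟩
  simpa [← kroneckerPow_mul, kroneckerPow_one, nonsing_inv_mul A hA] using
    kroneckerPow_mulVec_mem_symSet A⁻¹ h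

lemma symRank_kroneckerPow_mulVec {A : Matrix (Fin n) (Fin n) ℂ} (hA : IsUnit A.det)
    (T : Tensor m n) : symRank (kroneckerPow m A *ᵥ T) = symRank T := by
  simp only [symRank, kroneckerPow_mulVec_mem_symSet_iff hA]

lemma vandSet_subset_symSet (m n r : ℕ) : vandSet m n r ⊆ symSet m n r :=
  fun _ ⟨ab, hab⟩ => ⟨fun k => vand n (ab k).1 (ab k).2, hab⟩

lemma symRank_le_vandRank {T : Tensor m n} (hT : T ∈ vandSet m n r) :
    symRank T ≤ vandRank T :=
  Nat.sInf_le (vandSet_subset_symSet m n _ (Nat.sInf_mem (s := {k | T ∈ vandSet m n k}) ⟨r, hT⟩))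

lemma prod_vand (a b : ℂ) (i : Fin m → Fin n) :
    ∏ t, vand n a b (i t) = a ^ ((n - 1) * m - ∑ t, (i t : ℕ)) * b ^ ∑ t, (i t : ℕ) := by
  have hsum : ∑ t, (n - 1 - (i t : ℕ)) = (n - 1) * m - ∑ t, (i t : ℕ) := by
    rw [Finset.sum_tsub_distrib _ fun t _ => Nat.le_sub_one_of_lt (i t).isLt]
    simp [mul_comm]
  simp only [vand, Finset.prod_mul_distrib, Finset.prod_pow_eq_pow_sum, hsum]

lemma exists_isHankel_of_mem_vandSet {T : Tensor m n} (hT : T ∈ vandSet m n r) :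
    ∃ h : Fin ((n - 1) * m + 1) → ℂ, IsHankel T h := by
  obtain ⟨ab, hab⟩ := hT
  refine ⟨fun s => ∑ k, (ab k).1 ^ ((n - 1) * m - (s : ℕ)) * (ab k).2 ^ (s : ℕ), fun i => ?_⟩
  simp only [hab, prod_vand]

end Rank

/-- A symmetric tensor that is a sum of `r ≤ n+2` symmetric rank-one terms
with vectors in general linear position becomes Hankel after a base change. -/
theorem stmt_2 (m n r : ℕ) (hm : 1 ≤ m) (hn : 2 ≤ n) (hr1 : 1 ≤ r) (hr2 : r ≤ n + 2)
    (u : Fin r → Fin n → ℂ)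
    (hgen : ∀ s : Finset (Fin r), s.card ≤ n →
      LinearIndependent ℂ (fun k : s => u (k : Fin r)))
    (S : Tensor m n) (hS : ∀ i, S i = ∑ j, ∏ t, u j (i t)) :
    ∃ G : Matrix (Fin n) (Fin n) ℂ, IsUnit G.det ∧
      ∀ GS : Tensor m n, (∀ i, GS i = ∑ j, ∏ t, G.mulVec (u j) (i t)) →
        (∃ h : Fin ((n - 1) * m + 1) → ℂ, IsHankel GS h) ∧
        vandRank GS ≤ r ∧
        (symRank S = r → vandRank GS = symRank S) := by
  have hu : InGeneralLinearPosition ℂ u := fun s hs => hgen s (by simpa using hs)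
  obtain ⟨G, hG, hGu⟩ := exists_mulVec_eq_vand hn hr2 hu
  choose a b hab using hGu
  refine ⟨G, hG, fun GS hGS => ?_⟩
  have hmem : GS ∈ vandSet m n r := ⟨fun j => (a j, b j), by simpa only [hab] using hGS⟩
  have hle : vandRank GS ≤ r := Nat.sInf_le hmem
  have hrank : symRank GS = symRank S := by
    obtain rfl : S = sumPow m u := funext hS
    obtain rfl : GS = sumPow m fun j => G *ᵥ u j := funext hGS
    rw [← kroneckerPow_mulVec_sumPow, symRank_kroneckerPow_mulVec hG]
  exact ⟨exists_isHankel_of_mem_vandSet hmem, hle, fun hS =>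
    le_antisymm (hS ▸ hle) (hrank ▸ symRank_le_vandRank hmem)⟩
end
end

section
/- Let n ≥ 2, m ≥ 1, and let H be a Hankel tensor of order m and dimension n with parameter vector h ∈ ℂ^{d+1}, d = (n−1)m. Then brank_V(H) = brank_S(h), the border Waring rank of the associated binary form h(x,y). -/
open scoped BigOperators
open MvPolynomial

noncomputable section

/-!
The parameter vector of `(a x + b y) ^ d` is the Vandermonde vector `v(b, a) ∈ ℂ ^ (d + 1)`, and
the Hankel tensor with parameter vector `v(a, b)` is `v(a, b) ⊗ ⋯ ⊗ v(a, b)`. Hence the linear map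
`h ↦ H` carries the vectors of Waring rank at most `r` onto the tensors of Vandermonde rank at most
`r`. It is precomposition with the surjection `i ↦ i_1 + ⋯ + i_m`, so it is a topological embedding
and membership in closures transfers.
-/

section AssociatedForm

variable {d : ℕ}

lemma assocForm_eq_sum_monomial (h : Fin (d + 1) → ℂ) :
    assocForm d h = ∑ j : Fin (d + 1),
      monomial (Finsupp.single 0 (j : ℕ) + Finsupp.single 1 (d - (j : ℕ)))
        ((d.choose (j : ℕ) : ℂ) * h j) := by
  simp [assocForm, monomial_fin_two]

lemma coeff_assocForm (h : Fin (d + 1) → ℂ) (j : Fin (d + 1)) :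
    coeff (Finsupp.single 0 (j : ℕ) + Finsupp.single 1 (d - (j : ℕ))) (assocForm d h) =
      (d.choose (j : ℕ) : ℂ) * h j := by
  simp only [assocForm_eq_sum_monomial, coeff_sum, coeff_monomial]
  rw [Finset.sum_eq_single_of_mem j (Finset.mem_univ j), if_pos rfl]
  intro k _ hkj
  refine if_neg fun h_exponents => hkj (Fin.ext ?_)
  simpa using DFunLike.congr_fun h_exponents 0

lemma assocForm_injective : Function.Injective (assocForm d) := by
  intro g h hgh
  funext j
  have h_coeff := coeff_assocForm g j
  rw [hgh, coeff_assocForm] at h_coeff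
  have h_choose : (d.choose (j : ℕ) : ℂ) ≠ 0 :=
    Nat.cast_ne_zero.mpr (Nat.choose_pos j.is_le).ne'
  exact (mul_left_cancel₀ h_choose h_coeff).symm

lemma assocForm_sum {ι : Type*} (s : Finset ι) (h : ι → Fin (d + 1) → ℂ) :
    assocForm d (∑ k ∈ s, h k) = ∑ k ∈ s, assocForm d (h k) := by
  simp only [assocForm, Finset.sum_apply, Finset.mul_sum, map_sum, Finset.sum_mul]
  exact Finset.sum_comm

lemma assocForm_vand (a b : ℂ) :
    assocForm d (vand (d + 1) b a) = (C a * X 0 + C b * X 1) ^ d := by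
  rw [assocForm, add_pow, Finset.sum_range]
  refine Finset.sum_congr rfl fun j _ => ?_
  simp only [vand, Nat.add_sub_cancel, map_mul, map_pow, map_natCast, mul_pow]
  ring

lemma mem_waringSet_iff_exists_sum_vand {r : ℕ} {h : Fin (d + 1) → ℂ} :
    h ∈ waringSet d r ↔ ∃ ab : Fin r → ℂ × ℂ, h = ∑ k, vand (d + 1) (ab k).1 (ab k).2 := by
  have h_swap (ab : Fin r → ℂ × ℂ) :
      assocForm d h = ∑ k, (C (ab k).1 * X 0 + C (ab k).2 * X 1) ^ d ↔
        h = ∑ k, vand (d + 1) (ab k).swap.1 (ab k).swap.2 := by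
    simp only [← assocForm_vand, ← assocForm_sum, assocForm_injective.eq_iff, Prod.fst_swap,
      Prod.snd_swap]
  exact (exists_congr h_swap).trans (Prod.swap_surjective.comp_left.exists
    (p := fun ab : Fin r → ℂ × ℂ => h = ∑ k, vand (d + 1) (ab k).1 (ab k).2)).symm

end AssociatedForm

section HankelTensor

variable {m n : ℕ}

lemma sum_val_add_sum_sub_val (i : Fin m → Fin n) :
    ∑ j, (i j : ℕ) + ∑ j, (n - 1 - (i j : ℕ)) = (n - 1) * m := by
  rw [← Finset.sum_add_distrib,
    Finset.sum_congr rfl fun j _ => Nat.add_sub_cancel' (Nat.le_sub_one_of_lt (i j).isLt)]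
  simp [Nat.mul_comm]

/-- The sum `i_1 + ⋯ + i_m` of the entries of a multi-index, as an index of a parameter vector.
The Hankel tensor with parameter vector `h` is `h ∘ indexSum`. -/
def indexSum (i : Fin m → Fin n) : Fin ((n - 1) * m + 1) :=
  ⟨∑ j, (i j : ℕ), Nat.lt_succ_of_le (Nat.le.intro (sum_val_add_sum_sub_val i))⟩

lemma indexSum_surjective (hn : 0 < n) :
    Function.Surjective (indexSum : (Fin m → Fin n) → Fin ((n - 1) * m + 1)) := by
  intro s
  let top : Fin m →₀ ℕ := Finsupp.equivFunOnFinite.symm fun _ => n - 1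
  have hs : (s : ℕ) ≤ top.degree := by
    simpa [top, Finsupp.degree_eq_sum, Nat.mul_comm] using s.is_le
  obtain ⟨i, hi_le, hi_sum⟩ := Finsupp.exists_le_degree_eq top s hs
  refine ⟨fun j => ⟨i j, (hi_le j).trans_lt (Nat.sub_one_lt_of_lt hn)⟩, Fin.ext ?_⟩
  rw [← hi_sum, Finsupp.degree_eq_sum, indexSum]

lemma prod_vand_eq_vand_indexSum (a b : ℂ) (i : Fin m → Fin n) :
    ∏ j, vand n a b (i j) = vand ((n - 1) * m + 1) a b (indexSum i) := by
  have h_complement : ∑ j, (n - 1 - (i j : ℕ)) = (n - 1) * m - ∑ j, (i j : ℕ) :=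
    Nat.eq_sub_of_add_eq' (sum_val_add_sum_sub_val i)
  simp only [vand, indexSum, Finset.prod_mul_distrib, Finset.prod_pow_eq_pow_sum, h_complement,
    Nat.add_sub_cancel]

lemma mem_vandSet_iff_exists_sum_vand_comp_indexSum {r : ℕ} {T : Tensor m n} :
    T ∈ vandSet m n r ↔ ∃ ab : Fin r → ℂ × ℂ,
      T = (∑ k, vand ((n - 1) * m + 1) (ab k).1 (ab k).2) ∘ indexSum := by
  simp only [vandSet, Set.mem_ofPred_eq, prod_vand_eq_vand_indexSum, funext_iff,
    Function.comp_apply, Finset.sum_apply]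

lemma image_comp_indexSum_waringSet (r : ℕ) :
    (· ∘ indexSum) '' waringSet ((n - 1) * m) r = vandSet m n r := by
  ext T
  simp only [Set.mem_image, mem_waringSet_iff_exists_sum_vand,
    mem_vandSet_iff_exists_sum_vand_comp_indexSum]
  constructor
  · rintro ⟨_, ⟨ab, rfl⟩, rfl⟩
    exact ⟨ab, rfl⟩
  · rintro ⟨ab, rfl⟩
    exact ⟨_, ⟨ab, rfl⟩, rfl⟩

lemma comp_indexSum_mem_closure_vandSet_iff (hn : 0 < n) {r : ℕ}
    {h : Fin ((n - 1) * m + 1) → ℂ} :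
    h ∘ indexSum ∈ closure (vandSet m n r) ↔ h ∈ closure (waringSet ((n - 1) * m) r) := by
  rw [← image_comp_indexSum_waringSet,
    ((indexSum_surjective hn).isEmbedding_comp indexSum).closure_eq_preimage_closure_image,
    Set.mem_preimage]

end HankelTensor

/-- For a Hankel tensor `H` with parameter vector `h`,
`brank_V(H)` equals the border Waring rank of the associated binary form of `h`. -/
theorem stmt_4 (n m : ℕ) (hn : 2 ≤ n) (hm : 1 ≤ m)
    (H : Tensor m n) (h : Fin ((n - 1) * m + 1) → ℂ) (hH : IsHankel H h) :
    bVandRank H = bWaringRank ((n - 1) * m) h := by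
  obtain rfl : H = h ∘ indexSum := funext hH
  simp only [bVandRank, bWaringRank,
    comp_indexSum_mem_closure_vandSet_iff (Nat.zero_lt_of_lt hn)]
end
end

section
/- Let n ≥ 2, m ≥ 1, and let H be a Hankel tensor of order m and dimension n with parameter vector h ∈ ℂ^{d+1}, d = (n−1)m. Let s = ⌊d/2⌋ and r = rank C_{d−s,s}(h). Suppose r < d/2 + 1 and there exists a nonzero f = (f_0,…,f_r) ∈ ker C_{d−r,r}(h) whose binary form f(x,y) = f_0 x^r + f_1 x^{r−1}y + ⋯ + f_r y^r is squarefree as a homogeneous polynomial in ℂ[x,y]. Then the Vandermonde rank decomposition of H of length r is unique up to permutation and scaling: if H(i) = Σ_{k=1}^r ∏_{j=1}^m v(a_k,b_k)(i_j) = Σ_{k=1}^r ∏_{j=1}^m v(c_k,e_k)(i_j), then there exist a permutation σ of {1,…,r} and nonzero scalars t_1,…,t_r ∈ ℂ with (c_k, e_k) = (t_k a_{σ(k)}, t_k b_{σ(k)}) for all k. -/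
open scoped BigOperators
open MvPolynomial

noncomputable section

/-!
Read `(a k, b k)` as points of the projective line. A Vandermonde decomposition of the Hankel tensor
of `h` says that `h` is the vector of degree-`d` monomials summed over these points, so two
decompositions give point sets over which every binary form of degree `d` has the same sum. The
catalecticant then factors through the `r` Vandermonde vectors of the first set, and rank `r` forces
these to be independent, hence the points to be nonzero and pairwise non-proportional. If a point of
the first set were proportional to no point of the second, some product of `d` linear forms
would vanish at all points of both sets except that one, contradicting the equality of the two sums.
-/

section HomogeneousForms

variable {σ ι κ K : Type*}

lemma sum_eval_eq_sum_eval_of_isHomogeneous [Fintype σ] [Fintype ι] [Fintype κ] [CommSemiring K]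
    {p : ι → σ → K} {q : κ → σ → K} {d : ℕ}
    (hpq : ∀ s : σ →₀ ℕ, s.degree = d → ∑ k, ∏ i, p k i ^ s i = ∑ k, ∏ i, q k i ^ s i)
    {F : MvPolynomial σ K} (hF : F.IsHomogeneous d) :
    ∑ k, eval (p k) F = ∑ k, eval (q k) F := by
  simp only [eval_eq']
  rw [Finset.sum_comm, Finset.sum_comm (γ := κ)]
  refine Finset.sum_congr rfl fun s hs => ?_
  have hdeg : s.degree = d := by
    by_contra hne
    exact mem_support_iff.mp hs (hF.coeff_eq_zero hne)
  rw [← Finset.mul_sum, ← Finset.mul_sum, hpq s hdeg]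

variable [Field K]

lemma exists_isHomogeneous_one_eval_eq_zero {u v : σ → K} (huv : ∀ t : K, u ≠ t • v) :
    ∃ L : MvPolynomial σ K, L.IsHomogeneous 1 ∧ eval v L = 0 ∧ eval u L ≠ 0 := by
  by_cases hv : v = 0
  · obtain ⟨i, hi⟩ := Function.ne_iff.mp (huv 0)
    exact ⟨X i, isHomogeneous_X K i, by simp [hv], by simpa using hi⟩
  · obtain ⟨j, hj⟩ := Function.ne_iff.mp hv
    obtain ⟨i, hi⟩ := Function.ne_iff.mp (huv (u j / v j))
    refine ⟨C (v j) * X i - C (v i) * X j,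
      (isHomogeneous_C_mul_X _ i).sub (isHomogeneous_C_mul_X _ j), ?_, ?_⟩
    · simp only [map_sub, map_mul, eval_C, eval_X]
      ring
    · simp only [map_sub, map_mul, eval_C, eval_X]
      contrapose! hi
      rw [Pi.smul_apply, smul_eq_mul, div_mul_eq_mul_div, eq_div_iff hj]
      linear_combination hi

lemma exists_isHomogeneous_eval_eq_zero [Fintype ι] {d : ℕ} (hd : Fintype.card ι ≤ d)
    {u : σ → K} (hu : u ≠ 0) {v : ι → σ → K} (huv : ∀ i, ∀ t : K, u ≠ t • v i) :
    ∃ F : MvPolynomial σ K, F.IsHomogeneous d ∧ (∀ i, eval (v i) F = 0) ∧ eval u F ≠ 0 := by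
  choose L hL hLv hLu using fun i => exists_isHomogeneous_one_eval_eq_zero (huv i)
  obtain ⟨M, hM, -, hMu⟩ :=
    exists_isHomogeneous_one_eval_eq_zero (u := u) (v := 0) (by simpa using hu)
  refine ⟨(∏ i, L i) * M ^ (d - Fintype.card ι), ?_, fun i => ?_, ?_⟩
  · have hdeg : ∑ _i : ι, 1 + 1 * (d - Fintype.card ι) = d := by simp [hd]
    have hhom := (IsHomogeneous.prod Finset.univ L _ fun i _ => hL i).mul
      (hM.pow (d - Fintype.card ι))
    rwa [hdeg] at hhom
  · rw [map_mul, eval_prod, Finset.prod_eq_zero (Finset.mem_univ i) (hLv i), zero_mul]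
  · rw [map_mul, eval_prod, map_pow]
    exact mul_ne_zero (Finset.prod_ne_zero_iff.mpr fun i _ => hLu i) (pow_ne_zero _ hMu)

variable [Fintype ι] [Fintype κ] {p : ι → σ → K} {q : κ → σ → K} {d : ℕ}

lemma exists_eq_smul_of_sum_eval_eq (hd : Fintype.card ι + Fintype.card κ ≤ d + 1)
    (hpq : ∀ F : MvPolynomial σ K, F.IsHomogeneous d → ∑ k, eval (p k) F = ∑ k, eval (q k) F)
    {k : ι} (hk : p k ≠ 0) (hpk : ∀ l ≠ k, ∀ t : K, p k ≠ t • p l) :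
    ∃ l, ∃ t : K, p k = t • q l := by
  classical
  by_contra! hqk
  let others : {l // l ≠ k} ⊕ κ → σ → K := Sum.elim (fun l => p l) q
  have hcard : Fintype.card ({l // l ≠ k} ⊕ κ) ≤ d := by
    have hne : Fintype.card {l // l ≠ k} = Fintype.card ι - 1 := Set.card_ne_eq k
    have hpos : 0 < Fintype.card ι := Fintype.card_pos_iff.mpr ⟨k⟩
    rw [Fintype.card_sum, hne]
    omega
  have hothers : ∀ i, ∀ t : K, p k ≠ t • others i := by
    rintro (⟨l, hl⟩ | l)
    exacts [hpk l hl, hqk l]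
  obtain ⟨F, hF, hF0, hFk⟩ := exists_isHomogeneous_eval_eq_zero hcard hk hothers
  refine hFk ?_
  calc eval (p k) F = ∑ l, eval (p l) F :=
        (Fintype.sum_eq_single (f := fun l => eval (p l) F) k
          fun l hl => hF0 (.inl ⟨l, hl⟩)).symm
    _ = ∑ l, eval (q l) F := hpq F hF
    _ = 0 := Finset.sum_eq_zero fun l _ => hF0 (.inr l)

theorem exists_embedding_eq_smul_of_sum_eval_eq (hd : Fintype.card ι + Fintype.card κ ≤ d + 1)
    (hpq : ∀ F : MvPolynomial σ K, F.IsHomogeneous d → ∑ k, eval (p k) F = ∑ k, eval (q k) F)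
    (hp0 : ∀ k, p k ≠ 0) (hp : ∀ k l, ∀ t : K, p k = t • p l → k = l) :
    ∃ (τ : ι ↪ κ) (t : ι → K), ∀ k, t k ≠ 0 ∧ p k = t k • q (τ k) := by
  choose τ t ht using fun k => exists_eq_smul_of_sum_eval_eq hd hpq (hp0 k)
    fun l hl t htl => hl (hp k l t htl).symm
  have ht0 : ∀ k, t k ≠ 0 := fun k h0 => hp0 k (by rw [ht k, h0, zero_smul])
  have hτ : Function.Injective τ := fun k l hkl =>
    hp k l (t k / t l) (by rw [ht k, ht l, hkl, smul_smul, div_mul_cancel₀ _ (ht0 l)])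
  exact ⟨⟨τ, hτ⟩, t, fun k => ⟨ht0 k, ht k⟩⟩

end HomogeneousForms

section Hankel

open Matrix (rectVandermonde)

/-- The `M × N` Hankel matrix of a sequence `h`. The catalecticant `C_{d-s,s}(h)` is the case
`M = d - s + 1`, `N = s + 1`. -/
def hankelMatrix {R : Type*} (h : ℕ → R) (M N : ℕ) : Matrix (Fin M) (Fin N) R :=
  Matrix.of fun i j => h (i + j)

section CommRing

variable {R ι : Type*} [CommRing R] {a b : ι → R}

lemma hankelMatrix_eq_transpose_mul [Fintype ι] {h : ℕ → R} {M N : ℕ}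
    (hab : ∀ q ≤ M + N, h q = ∑ k, a k ^ (M + N - q) * b k ^ q) :
    hankelMatrix h (M + 1) (N + 1) =
      (rectVandermonde b a (M + 1)).transpose * rectVandermonde b a (N + 1) := by
  ext i j
  rw [hankelMatrix, Matrix.of_apply, hab _ (by omega), Matrix.mul_apply]
  refine Finset.sum_congr rfl fun k _ => ?_
  have hexp : M + N - (i + j : ℕ) = i.rev + j.rev := by
    simp only [Fin.val_rev]
    omega
  rw [Matrix.transpose_apply, Matrix.rectVandermonde_apply, Matrix.rectVandermonde_apply, hexp]
  ring

lemma row_rectVandermonde_smul {k l : ι} {t : R}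
    (ha : a k = t * a l) (hb : b k = t * b l) (N : ℕ) :
    (rectVandermonde b a (N + 1)).row k =
      t ^ N • (rectVandermonde b a (N + 1)).row l := by
  ext j
  have hN : t ^ N = t ^ (j : ℕ) * t ^ (j.rev : ℕ) := by
    rw [← pow_add, Fin.val_rev]
    congr 1
    omega
  simp only [Matrix.row, Matrix.rectVandermonde_apply, Pi.smul_apply, smul_eq_mul, ha, hb, mul_pow,
    hN]
  ring

end CommRing

variable {K : Type*} [Field K] {ι : Type*} {a b : ι → K}

lemma linearIndependent_rectVandermonde_of_card_le_rank [Fintype ι] {h : ℕ → K} {M N : ℕ}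
    (hr : Fintype.card ι ≤ (hankelMatrix h (M + 1) (N + 1)).rank)
    (hab : ∀ q ≤ M + N, h q = ∑ k, a k ^ (M + N - q) * b k ^ q) :
    LinearIndependent K (rectVandermonde b a (M + 1)).row := by
  have hrank : Fintype.card ι ≤ (rectVandermonde b a (M + 1)).rank := by
    rw [hankelMatrix_eq_transpose_mul hab] at hr
    rw [← Matrix.rank_transpose]
    exact hr.trans (Matrix.rank_mul_le_left _ _)
  rw [Matrix.rank_eq_finrank_span_row] at hrank
  exact linearIndependent_iff_card_le_finrank_span.mpr hrank

lemma eq_of_eq_smul_of_linearIndependent_rectVandermonde {N : ℕ}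
    (hind : LinearIndependent K (rectVandermonde b a (N + 1)).row) {k l : ι} {t : K}
    (ht : ![a k, b k] = t • ![a l, b l]) : k = l := by
  have ha : a k = t * a l := congrFun ht 0
  have hb : b k = t * b l := congrFun ht 1
  by_contra hkl
  refine hind.notMem_span_image (s := {l}) hkl ?_
  rw [Set.image_singleton, row_rectVandermonde_smul ha hb]
  exact Submodule.smul_mem _ _ (Submodule.mem_span_singleton_self _)

lemma ne_zero_of_linearIndependent_rectVandermonde {N : ℕ} (hN : N ≠ 0)
    (hind : LinearIndependent K (rectVandermonde b a (N + 1)).row) (k : ι) :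
    ![a k, b k] ≠ 0 := by
  intro h0
  have ha : a k = 0 * a k := (congrFun h0 0).trans (zero_mul _).symm
  have hb : b k = 0 * b k := (congrFun h0 1).trans (zero_mul _).symm
  refine hind.ne_zero k ?_
  rw [row_rectVandermonde_smul ha hb, zero_pow hN, zero_smul]

end Hankel

section VandermondeDecomposition

open Matrix (rectVandermonde)

lemma exists_fin_sum_eq {N m q : ℕ} (hq : q ≤ N * m) :
    ∃ i : Fin m → Fin (N + 1), ∑ j, (i j : ℕ) = q := by
  induction m generalizing q with
  | zero => exact ⟨Fin.elim0, by simp_all⟩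
  | succ m ih =>
    obtain ⟨i, hi⟩ := ih (q := q - min q N) (by rw [Nat.mul_succ] at hq; omega)
    refine ⟨Fin.cons ⟨min q N, by omega⟩ i, ?_⟩
    simp only [Fin.sum_univ_succ, Fin.cons_zero, Fin.cons_succ, hi]
    omega

lemma prod_rectVandermonde {R ι : Type*} [CommRing R] {m n : ℕ} (a b : ι → R) (k : ι)
    (i : Fin m → Fin n) :
    ∏ j, rectVandermonde b a n k (i j) =
      a k ^ ((n - 1) * m - ∑ j, (i j : ℕ)) * b k ^ ∑ j, (i j : ℕ) := by
  have hsum : ∑ j, ((i j).rev : ℕ) + ∑ j, (i j : ℕ) = (n - 1) * m := by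
    have hj (j : Fin m) : ((i j).rev : ℕ) + i j = n - 1 := by
      rw [Fin.val_rev]
      omega
    rw [← Finset.sum_add_distrib, Finset.sum_congr rfl fun j _ => hj j, Fin.sum_const,
      smul_eq_mul, mul_comm]
  rw [← hsum, Nat.add_sub_cancel]
  simp only [Matrix.rectVandermonde_apply, Finset.prod_mul_distrib, Finset.prod_pow_eq_pow_sum]
  exact mul_comm _ _

lemma eq_sum_pow_mul_pow_of_vandermonde_decomposition {R ι : Type*} [CommRing R] [Fintype ι]
    {m n : ℕ} (hn : n ≠ 0) {h : ℕ → R} {a b : ι → R}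
    (hab : ∀ i : Fin m → Fin n,
      h (∑ j, (i j : ℕ)) = ∑ k, ∏ j, rectVandermonde b a n k (i j)) :
    ∀ q ≤ (n - 1) * m, h q = ∑ k, a k ^ ((n - 1) * m - q) * b k ^ q := by
  intro q hq
  obtain ⟨N, rfl⟩ := Nat.exists_eq_succ_of_ne_zero hn
  obtain ⟨i, rfl⟩ := exists_fin_sum_eq hq
  rw [hab i]
  exact Finset.sum_congr rfl fun k _ => prod_rectVandermonde a b k i

theorem stmt_6_general {K : Type*} [Field K] {n m s r r' : ℕ} (hs : s < (n - 1) * m) {h : ℕ → K}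
    (hr : r = (hankelMatrix h ((n - 1) * m - s + 1) (s + 1)).rank)
    (hrr' : r + r' ≤ (n - 1) * m + 1) {a b : Fin r → K} {c e : Fin r' → K}
    (hab : ∀ i : Fin m → Fin n,
      h (∑ j, (i j : ℕ)) = ∑ k, ∏ j, rectVandermonde b a n k (i j))
    (hce : ∀ i : Fin m → Fin n,
      h (∑ j, (i j : ℕ)) = ∑ k, ∏ j, rectVandermonde e c n k (i j)) :
    ∃ (σ : Fin r ↪ Fin r') (t : Fin r → K),
      ∀ k, t k ≠ 0 ∧ a k = t k * c (σ k) ∧ b k = t k * e (σ k) := by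
  have hn : n ≠ 0 := by
    rintro rfl
    simp at hs
  have hab_sum := eq_sum_pow_mul_pow_of_vandermonde_decomposition hn hab
  have hce_sum := eq_sum_pow_mul_pow_of_vandermonde_decomposition hn hce
  generalize (n - 1) * m = d at *
  have hind : LinearIndependent K (rectVandermonde b a (d - s + 1)).row :=
    linearIndependent_rectVandermonde_of_card_le_rank ((Fintype.card_fin r).trans_le hr.le)
      (by rwa [Nat.sub_add_cancel hs.le])
  have hmonomials (μ : Fin 2 →₀ ℕ) (hμ : μ.degree = d) :
      ∑ k, ∏ i, ![a k, b k] i ^ μ i = ∑ k, ∏ i, ![c k, e k] i ^ μ i := by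
    have hμ' : μ 0 + μ 1 = d := by rw [← hμ, Finsupp.degree_eq_sum, Fin.sum_univ_two]
    have hsums := (hab_sum (μ 1) (by omega)).symm.trans (hce_sum (μ 1) (by omega))
    simpa [Fin.prod_univ_two, ← hμ'] using hsums
  obtain ⟨σ, t, ht⟩ := exists_embedding_eq_smul_of_sum_eval_eq (by simpa using hrr')
    (fun F hF => sum_eval_eq_sum_eval_of_isHomogeneous hmonomials hF)
    (ne_zero_of_linearIndependent_rectVandermonde (Nat.sub_ne_zero_of_lt hs) hind)
    fun k l t => eq_of_eq_smul_of_linearIndependent_rectVandermonde hind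
  exact ⟨σ, t, fun k => ⟨(ht k).1, congrFun (ht k).2 0, congrFun (ht k).2 1⟩⟩

lemma vand_eq_rectVandermonde {ι : Type*} (n : ℕ) (a b : ι → ℂ) (k : ι) :
    vand n (a k) (b k) = rectVandermonde b a n k := by
  ext i
  rw [vand, Matrix.rectVandermonde_apply, Fin.val_rev, Nat.sub_sub, Nat.add_comm 1, mul_comm]

lemma hMat_eq_hankelMatrix (d s : ℕ) (h : Fin (d + 1) → ℂ) :
    hMat d s h = hankelMatrix (Function.extend Fin.val h 0) (d - s + 1) (s + 1) := by
  ext i j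
  rw [hMat, hankelMatrix, Matrix.of_apply, Matrix.of_apply]
  split_ifs with hij
  · exact (Fin.val_injective.extend_apply h 0 ⟨i + j, hij⟩).symm
  · rw [Function.extend_apply' _ _ _ fun ⟨q, hq⟩ => hij (hq ▸ q.isLt), Pi.zero_apply]

lemma IsHankel.extend_eq_sum_prod_rectVandermonde {m n : ℕ} {ι : Type*} [Fintype ι] {H : Tensor m n}
    {h : Fin ((n - 1) * m + 1) → ℂ} (hH : IsHankel H h) {a b : ι → ℂ}
    (hab : ∀ i, H i = ∑ k, ∏ j, vand n (a k) (b k) (i j)) (i : Fin m → Fin n) :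
    Function.extend Fin.val h 0 (∑ j, (i j : ℕ)) = ∑ k, ∏ j, rectVandermonde b a n k (i j) := by
  simp only [← vand_eq_rectVandermonde, ← hab, hH i]
  exact Fin.val_injective.extend_apply h 0 ⟨_, _⟩

end VandermondeDecomposition

/-- Uniqueness of the Vandermonde rank decomposition when
`r = rank C_{d-s,s}(h) < d/2 + 1` and the kernel form is squarefree. -/
theorem stmt_6 (n m : ℕ) (hn : 2 ≤ n) (hm : 1 ≤ m)
    (H : Tensor m n) (h : Fin ((n - 1) * m + 1) → ℂ) (hH : IsHankel H h)
    (r : ℕ) (hr : r = (hMat ((n - 1) * m) ((n - 1) * m / 2) h).rank)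
    (hrs : 2 * r < (n - 1) * m + 2)
    (f : Fin (r + 1) → ℂ) (hf0 : f ≠ 0)
    (hker : (hMat ((n - 1) * m) r h).mulVec f = 0)
    (hsf : Squarefree (binForm r f))
    (a b c e : Fin r → ℂ)
    (h1 : ∀ i, H i = ∑ k, ∏ j, vand n (a k) (b k) (i j))
    (h2 : ∀ i, H i = ∑ k, ∏ j, vand n (c k) (e k) (i j)) :
    ∃ (σ : Equiv.Perm (Fin r)) (t : Fin r → ℂ),
      ∀ k, t k ≠ 0 ∧ c k = t k * a (σ k) ∧ e k = t k * b (σ k) := by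
  have hd : 0 < (n - 1) * m := Nat.mul_pos (by omega) hm
  obtain ⟨σ, t, ht⟩ := stmt_6_general (Nat.div_lt_self hd one_lt_two)
    (hMat_eq_hankelMatrix _ _ h ▸ hr) (by omega)
    (hH.extend_eq_sum_prod_rectVandermonde h2) (hH.extend_eq_sum_prod_rectVandermonde h1)
  exact ⟨σ.equivOfFiniteSelfEmbedding, t, ht⟩
end
end
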